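/- arXiv:2409.03594 — 3 statements merged into one kernel-verified Lean document; each statement's English description precedes it below -/
import Mathlib

section
/- For any chores instance on a simple graph, an orientation X = (X_1, …, X_n) is EFX_0 if and only if for every agent a_i: if X_i contains an edge that is a chore for a_i, then |X_i| = 1; and otherwise, every edge in X_i is a dummy for a_i. -/
open Finset

variable {V : Type*} [DecidableEq V]

/-- `e` has strictly positive marginal value (is a *good*) for the valuation `v`
relative to the item set `M`. -/
def IsGoodFor (v : Finset (Sym2 V) → ℝ) (M : Finset (Sym2 V)) (e : Sym2 V) : Prop :=
  ∀ S ⊆ M.erase e, v S < v (insert e S)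

/-- `e` has strictly negative marginal value (is a *chore*) for the valuation `v`
relative to the item set `M`. -/
def IsChoreFor (v : Finset (Sym2 V) → ℝ) (M : Finset (Sym2 V)) (e : Sym2 V) : Prop :=
  ∀ S ⊆ M.erase e, v (insert e S) < v S

/-- `e` has zero marginal value (is a *dummy*) for the valuation `v`
relative to the item set `M`. -/
def IsDummyFor (v : Finset (Sym2 V) → ℝ) (M : Finset (Sym2 V)) (e : Sym2 V) : Prop :=
  ∀ S ⊆ M.erase e, v (insert e S) = v S

/-- A valid instance on a simple graph: the edge set `M` consists of non-loop edges,
every edge is (for every agent) a good, a chore, or a dummy, and every edge not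
incident to an agent is a dummy for that agent. -/
def ValidInstance (M : Finset (Sym2 V)) (v : V → Finset (Sym2 V) → ℝ) : Prop :=
  (∀ e ∈ M, ¬ e.IsDiag) ∧
  (∀ (i : V), ∀ e ∈ M, IsGoodFor (v i) M e ∨ IsChoreFor (v i) M e ∨ IsDummyFor (v i) M e) ∧
  (∀ (i : V), ∀ e ∈ M, i ∉ e → IsDummyFor (v i) M e)

/-- `X` is a (complete) allocation of the items in `M`: bundles are contained in `M`
and every item belongs to exactly one bundle. -/
def IsAllocation (M : Finset (Sym2 V)) (X : V → Finset (Sym2 V)) : Prop :=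
  (∀ i, X i ⊆ M) ∧ ∀ e ∈ M, ∃! i, e ∈ X i

/-- Every allocated edge goes to one of its endpoint agents. -/
def IsOrientation (X : V → Finset (Sym2 V)) : Prop :=
  ∀ i, ∀ e ∈ X i, i ∈ e

/-- Agent `i` envies agent `j`. -/
def Envies (v : V → Finset (Sym2 V) → ℝ) (X : V → Finset (Sym2 V)) (i j : V) : Prop :=
  v i (X i) < v i (X j)

/-- EFX condition on the envied bundle, removing an item whose removal *strictly*
decreases the value (superscript `+`). -/
def CondEnviedStrict (v : V → Finset (Sym2 V) → ℝ) (X : V → Finset (Sym2 V)) : Prop :=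
  ∀ i j, Envies v X i j → ∀ e ∈ X j,
    v i ((X j).erase e) < v i (X j) → v i ((X j).erase e) ≤ v i (X i)

/-- EFX condition on the envied bundle, removing an item whose removal weakly
decreases the value (superscript `0`). -/
def CondEnviedWeak (v : V → Finset (Sym2 V) → ℝ) (X : V → Finset (Sym2 V)) : Prop :=
  ∀ i j, Envies v X i j → ∀ e ∈ X j,
    v i ((X j).erase e) ≤ v i (X j) → v i ((X j).erase e) ≤ v i (X i)

/-- EFX condition on the envious agent's own bundle, removing an item whose removal
*strictly* increases the value (subscript `-`). -/
def CondOwnStrict (v : V → Finset (Sym2 V) → ℝ) (X : V → Finset (Sym2 V)) : Prop :=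
  ∀ i j, Envies v X i j → ∀ e ∈ X i,
    v i (X i) < v i ((X i).erase e) → v i (X j) ≤ v i ((X i).erase e)

/-- EFX condition on the envious agent's own bundle, removing an item whose removal
weakly increases the value (subscript `0`). -/
def CondOwnWeak (v : V → Finset (Sym2 V) → ℝ) (X : V → Finset (Sym2 V)) : Prop :=
  ∀ i j, Envies v X i j → ∀ e ∈ X i,
    v i (X i) ≤ v i ((X i).erase e) → v i (X j) ≤ v i ((X i).erase e)

/-!
If agent `i` holds a chore `s(i, k)`, then her neighbour `k` can hold no edge incident to `i`: on a
simple graph it would have to be `s(i, k)` itself. Hence `k`'s bundle is worth exactly `∅` to `i`,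
and `i` envies `k` for as long as she keeps a chore; under EFX₀ she can therefore hold no item
besides it. Conversely, no bundle of a chores instance is worth more than `∅`, and `∅` is the value
of what is left of a singleton once its item is removed, and of any bundle of dummies.
-/

section Valuation

variable {w : Finset (Sym2 V) → ℝ} {M S : Finset (Sym2 V)} {e : Sym2 V}

theorem IsChoreFor.lt_erase (hc : IsChoreFor w M e) (hS : S ⊆ M) (he : e ∈ S) :
    w S < w (S.erase e) := by
  simpa only [insert_erase he] using hc (S.erase e) (erase_subset_erase e hS)

theorem IsDummyFor.eq_erase (hd : IsDummyFor w M e) (hS : S ⊆ M) (he : e ∈ S) :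
    w S = w (S.erase e) := by
  simpa only [insert_erase he] using hd (S.erase e) (erase_subset_erase e hS)

theorem le_erase_of_isChoreFor_or_isDummyFor (h : IsChoreFor w M e ∨ IsDummyFor w M e)
    (hS : S ⊆ M) (he : e ∈ S) : w S ≤ w (S.erase e) :=
  h.elim (fun hc ↦ (hc.lt_erase hS he).le) (fun hd ↦ (hd.eq_erase hS he).le)

theorem le_empty_of_forall_isChoreFor_or_isDummyFor
    (h : ∀ e ∈ S, IsChoreFor w M e ∨ IsDummyFor w M e) (hS : S ⊆ M) : w S ≤ w ∅ := by
  induction S using Finset.induction_on with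
  | empty => exact le_rfl
  | insert a T ha ih =>
    have hle : w (insert a T) ≤ w T := by
      simpa only [erase_insert ha] using
        le_erase_of_isChoreFor_or_isDummyFor (h a (mem_insert_self a T)) hS (mem_insert_self a T)
    exact hle.trans (ih (fun e he ↦ h e (mem_insert_of_mem he)) ((subset_insert a T).trans hS))

theorem eq_empty_of_forall_isDummyFor (h : ∀ e ∈ S, IsDummyFor w M e) (hS : S ⊆ M) :
    w S = w ∅ := by
  induction S using Finset.induction_on with
  | empty => rfl
  | insert a T ha ih =>
    have heq : w (insert a T) = w T := by
      simpa only [erase_insert ha] using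
        (h a (mem_insert_self a T)).eq_erase hS (mem_insert_self a T)
    exact heq.trans (ih (fun e he ↦ h e (mem_insert_of_mem he)) ((subset_insert a T).trans hS))

theorem IsChoreFor.lt_empty (hc : IsChoreFor w M e) (he : e ∈ S)
    (h : ∀ f ∈ S, IsChoreFor w M f ∨ IsDummyFor w M f) (hS : S ⊆ M) : w S < w ∅ :=
  (hc.lt_erase hS he).trans_le <| le_empty_of_forall_isChoreFor_or_isDummyFor
    (fun f hf ↦ h f (mem_of_mem_erase hf)) ((erase_subset e S).trans hS)

end Valuation

section Allocation

variable {M : Finset (Sym2 V)} {v : V → Finset (Sym2 V) → ℝ} {X : V → Finset (Sym2 V)} {i j : V}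
  {e : Sym2 V}

theorem CondOwnWeak.card_eq_one_of_isChoreFor (hefx : CondOwnWeak v X)
    (hchores : ∀ f ∈ X i, IsChoreFor (v i) M f ∨ IsDummyFor (v i) M f) (hX : X i ⊆ M)
    (he : e ∈ X i) (hc : IsChoreFor (v i) M e) (hj : v i ∅ ≤ v i (X j)) : #(X i) = 1 := by
  refine card_eq_one.2 ⟨e, eq_singleton_iff_unique_mem.2 ⟨he, fun f hf ↦ ?_⟩⟩
  by_contra hfe
  have henvies : Envies v X i j := (hc.lt_empty he hchores hX).trans_le hj
  have hle : v i (X j) ≤ v i ((X i).erase f) :=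
    hefx i j henvies f hf (le_erase_of_isChoreFor_or_isDummyFor (hchores f hf) hX hf)
  have hlt : v i ((X i).erase f) < v i ∅ :=
    hc.lt_empty (mem_erase.2 ⟨Ne.symm hfe, he⟩) (fun g hg ↦ hchores g (mem_of_mem_erase hg))
      ((erase_subset f (X i)).trans hX)
  exact (hlt.trans_le (hj.trans hle)).false

theorem condOwnWeak_of_card_eq_one_or_forall_isDummyFor
    (hchores : ∀ i, ∀ e ∈ M, IsChoreFor (v i) M e ∨ IsDummyFor (v i) M e) (hX : ∀ i, X i ⊆ M)
    (h : ∀ i, #(X i) = 1 ∨ ∀ e ∈ X i, IsDummyFor (v i) M e) : CondOwnWeak v X := by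
  intro i j henvies e he _
  have hj : v i (X j) ≤ v i ∅ :=
    le_empty_of_forall_isChoreFor_or_isDummyFor (fun f hf ↦ hchores i f (hX j hf)) (hX j)
  rcases h i with hcard | hdummy
  · have hempty : (X i).erase e = ∅ := by
      rw [← card_eq_zero, card_erase_of_mem he, hcard]
    rwa [hempty]
  · have hi : v i (X i) = v i ∅ := eq_empty_of_forall_isDummyFor hdummy (hX i)
    exact absurd henvies (hj.trans_eq hi.symm).not_gt

omit [DecidableEq V] in
theorem IsAllocation.eq_of_mem (hX : IsAllocation M X) (hi : e ∈ X i) (hj : e ∈ X j) : i = j :=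
  (hX.2 e (hX.1 i hi)).unique hi hj

omit [DecidableEq V] in
theorem IsOrientation.notMem_of_mk_mem (hor : IsOrientation X) (hX : IsAllocation M X)
    (hij : i ≠ j) (hi : s(i, j) ∈ X i) (he : e ∈ X j) : i ∉ e := by
  intro hie
  obtain rfl : e = s(i, j) := (Sym2.mem_and_mem_iff hij).1 ⟨hie, hor j e he⟩
  exact hij (hX.eq_of_mem hi he)

theorem ValidInstance.exists_forall_isDummyFor (hvalid : ValidInstance M v)
    (hX : IsAllocation M X) (hor : IsOrientation X) (he : e ∈ X i) :
    ∃ j, ∀ f ∈ X j, IsDummyFor (v i) M f := by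
  obtain ⟨hloopless, -, hincident⟩ := hvalid
  obtain ⟨j, rfl⟩ := Sym2.mem_iff_exists.1 (hor i e he)
  have hij : i ≠ j := fun h ↦ hloopless _ (hX.1 i he) (Sym2.mk_isDiag_iff.2 h)
  exact ⟨j, fun f hf ↦ hincident i f (hX.1 j hf) (hor.notMem_of_mk_mem hX hij he hf)⟩

theorem stmt4_general (hchores : ∀ i, ∀ e ∈ M, IsChoreFor (v i) M e ∨ IsDummyFor (v i) M e)
    (hX : ∀ i, X i ⊆ M)
    (hdummy : ∀ i, ∀ e ∈ X i, IsChoreFor (v i) M e → ∃ j, ∀ f ∈ X j, IsDummyFor (v i) M f) :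
    CondOwnWeak v X ↔
      ∀ i : V,
        ((∃ e ∈ X i, IsChoreFor (v i) M e) → (X i).card = 1) ∧
        ((¬ ∃ e ∈ X i, IsChoreFor (v i) M e) → ∀ e ∈ X i, IsDummyFor (v i) M e) := by
  constructor
  · refine fun hefx i ↦ ⟨?_, fun hnone e he ↦ ?_⟩
    · rintro ⟨e, he, hc⟩
      obtain ⟨j, hj⟩ := hdummy i e he hc
      exact hefx.card_eq_one_of_isChoreFor (fun f hf ↦ hchores i f (hX i hf)) (hX i) he hc
        (eq_empty_of_forall_isDummyFor hj (hX j)).ge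
    · exact (hchores i e (hX i he)).resolve_left fun hc ↦ hnone ⟨e, he, hc⟩
  · exact fun h ↦ condOwnWeak_of_card_eq_one_or_forall_isDummyFor hchores hX fun i ↦
      (em (∃ e ∈ X i, IsChoreFor (v i) M e)).imp (h i).1 (h i).2

end Allocation

/-- For a chores instance on a simple graph, an orientation is EFX₀
iff every agent either receives exactly one edge when her bundle contains a chore for
her, and otherwise receives only dummies. -/
theorem stmt4 {V : Type*} [DecidableEq V]
    (M : Finset (Sym2 V)) (v : V → Finset (Sym2 V) → ℝ)
    (hvalid : ValidInstance M v)
    (hchores : ∀ (i : V), ∀ e ∈ M, IsChoreFor (v i) M e ∨ IsDummyFor (v i) M e)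
    (X : V → Finset (Sym2 V))
    (hX : IsAllocation M X) (hor : IsOrientation X) :
    CondOwnWeak v X ↔
      ∀ i : V,
        ((∃ e ∈ X i, IsChoreFor (v i) M e) → (X i).card = 1) ∧
        ((¬ ∃ e ∈ X i, IsChoreFor (v i) M e) → ∀ e ∈ X i, IsDummyFor (v i) M e) :=
  stmt4_general hchores hX.1 fun _ _ he _ ↦ hvalid.exists_forall_isDummyFor hX hor he
end

section
/- Consider an instance on a simple graph G = (N, M) such that (1) every edge is a good for both of its endpoint agents, (2) every agent has at least one incident edge that is priceless to her, and (3) every edge that is priceless to some agent is priceless to both of its endpoint agents. Then in every EFX^0_0 allocation, each edge is allocated to one of its two endpoint agents (i.e., every EFX^0_0 allocation is an orientation). -/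
open Finset

variable {V : Type*} [DecidableEq V]

/-- `e` is priceless to the valuation `v` relative to the item set `M`: any bundle
containing `e` is strictly preferred to any bundle not containing `e`. -/
def Priceless (v : Finset (Sym2 V) → ℝ) (M : Finset (Sym2 V)) (e : Sym2 V) : Prop :=
  ∀ S₁ ⊆ M, ∀ S₂ ⊆ M, e ∉ S₁ → e ∈ S₂ → v S₁ < v S₂

/-!
Suppose agent `k` holds an edge `e` not incident to her. Removing this dummy leaves the value of her
bundle unchanged, so the subscript-`0` condition says that she envies nobody; hence she holds an
edge `f` priceless to her. The other endpoint of `f` envies `k` as long as `k` keeps `f`, and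
removing an item never raises her value of a bundle, so the superscript-`0` condition leaves no room
in `k`'s bundle for a second item. Thus `e = f`, but a dummy is not priceless.
-/

section EnvyAndPricelessness

variable {v : V → Finset (Sym2 V) → ℝ} {M : Finset (Sym2 V)} {X : V → Finset (Sym2 V)}
  {i j : V} {f : Sym2 V}

omit [DecidableEq V]

theorem IsAllocation.eq_of_mem_of_mem (hX : IsAllocation M X) (hi : f ∈ X i) (hj : f ∈ X j) :
    i = j :=
  (hX.2 f (hX.1 i hi)).unique hi hj

theorem Priceless.envies (hf : Priceless (v i) M f) (hX : ∀ k, X k ⊆ M) (hi : f ∉ X i)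
    (hj : f ∈ X j) : Envies v X i j :=
  hf _ (hX i) _ (hX j) hi hj

theorem Priceless.mem_of_forall_not_envies (hf : Priceless (v i) M f) (hfM : f ∈ M)
    (hX : IsAllocation M X) (hi : ∀ j, ¬ Envies v X i j) : f ∈ X i := by
  obtain ⟨j, hj, -⟩ := hX.2 f hfM
  by_contra hfi
  exact hi j (hf.envies hX.1 hfi hj)

theorem exists_priceless_and_exists_ne_priceless (hloopless : ∀ e ∈ M, ¬ e.IsDiag)
    (hhas : ∀ i, ∃ e ∈ M, i ∈ e ∧ Priceless (v i) M e)
    (hboth : ∀ e ∈ M, ∀ i, Priceless (v i) M e → ∀ j ∈ e, Priceless (v j) M e) (i : V) :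
    ∃ f ∈ M, Priceless (v i) M f ∧ ∃ j ≠ i, Priceless (v j) M f := by
  obtain ⟨f, hfM, hif, hf⟩ := hhas i
  exact ⟨f, hfM, hf, Sym2.Mem.other hif, Sym2.other_ne (hloopless f hfM) hif,
    hboth f hfM i hf _ (Sym2.other_mem hif)⟩

end EnvyAndPricelessness

section MarginalValues

variable {w : Finset (Sym2 V) → ℝ} {M S : Finset (Sym2 V)} {e : Sym2 V}

theorem IsDummyFor.apply_erase (he : IsDummyFor w M e) (hS : S ⊆ M) : w (S.erase e) = w S := by
  by_cases heS : e ∈ S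
  · simpa only [insert_erase heS] using (he (S.erase e) (erase_subset_erase e hS)).symm
  · rw [erase_eq_of_notMem heS]

theorem Priceless.not_isDummyFor (he : Priceless w M e) (heM : e ∈ M) : ¬ IsDummyFor w M e :=
  fun hdummy ↦ (he _ (erase_subset e M) M Subset.rfl (notMem_erase e M) heM).ne
    (hdummy.apply_erase Subset.rfl)

theorem monotoneOn_Iic_of_le_insert {α β : Type*} [DecidableEq α] [Preorder β]
    {g : Finset α → β} {M : Finset α}
    (hg : ∀ e ∈ M, ∀ S ⊆ M.erase e, g S ≤ g (insert e S)) : MonotoneOn g (Set.Iic M) := by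
  have hmono : Monotone fun S ↦ g (S ∩ M) := by
    refine monotone_iff_forall_le_insert.2 fun S e heS ↦ ?_
    by_cases heM : e ∈ M
    · simpa only [insert_inter_of_mem heM] using hg e heM (S ∩ M) fun a ha ↦
        mem_erase.2 ⟨ne_of_mem_of_not_mem (mem_inter.1 ha).1 heS, (mem_inter.1 ha).2⟩
    · simp only [insert_inter_of_notMem heM, le_refl]
  intro S hS T hT hST
  simpa only [inter_eq_left.2 hS, inter_eq_left.2 hT] using hmono hST

theorem monotoneOn_of_isGoodFor_of_isDummyFor {v : V → Finset (Sym2 V) → ℝ}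
    (hgood : ∀ e ∈ M, ∀ i ∈ e, IsGoodFor (v i) M e)
    (hdummy : ∀ i, ∀ e ∈ M, i ∉ e → IsDummyFor (v i) M e) (i : V) :
    MonotoneOn (v i) (Set.Iic M) := by
  refine monotoneOn_Iic_of_le_insert fun e he S hS ↦ ?_
  by_cases hi : i ∈ e
  · exact (hgood e he i hi S hS).le
  · exact (hdummy i e he hi S hS).ge

end MarginalValues

section EFX

variable {v : V → Finset (Sym2 V) → ℝ} {M : Finset (Sym2 V)} {X : V → Finset (Sym2 V)}
  {i j : V} {e f : Sym2 V}

theorem CondOwnWeak.not_envies (hown : CondOwnWeak v X) (he : e ∈ X i)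
    (hval : v i ((X i).erase e) = v i (X i)) (j : V) : ¬ Envies v X i j := fun henvy ↦
  (hown i j henvy e he hval.ge).not_gt (hval.trans_lt henvy)

theorem CondEnviedWeak.eq_singleton_of_priceless (henvied : CondEnviedWeak v X)
    (hX : IsAllocation M X) (hmono : MonotoneOn (v i) (Set.Iic M)) (hf : Priceless (v i) M f)
    (hfj : f ∈ X j) (hij : i ≠ j) : X j = {f} := by
  have hfi : f ∉ X i := fun hfi ↦ hij (hX.eq_of_mem_of_mem hfi hfj)
  refine eq_singleton_iff_unique_mem.2 ⟨hfj, fun e he ↦ ?_⟩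
  by_contra hef
  have hsub : (X j).erase e ⊆ M := (erase_subset e (X j)).trans (hX.1 j)
  have hle : v i ((X j).erase e) ≤ v i (X i) :=
    henvied i j (hf.envies hX.1 hfi hfj) e he (hmono hsub (hX.1 j) (erase_subset e (X j)))
  have hlt : v i (X i) < v i ((X j).erase e) :=
    hf _ (hX.1 i) _ hsub hfi (mem_erase.2 ⟨Ne.symm hef, hfj⟩)
  exact hle.not_gt hlt

end EFX

theorem stmt8_general {V : Type*} [DecidableEq V]
    (M : Finset (Sym2 V)) (v : V → Finset (Sym2 V) → ℝ)
    (hmono : ∀ i, MonotoneOn (v i) (Set.Iic M))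
    (hdummy : ∀ i, ∀ e ∈ M, i ∉ e → IsDummyFor (v i) M e)
    (hshared : ∀ i, ∃ f ∈ M, Priceless (v i) M f ∧ ∃ j ≠ i, Priceless (v j) M f)
    (X : V → Finset (Sym2 V)) (hX : IsAllocation M X)
    (hEFX : CondEnviedWeak v X ∧ CondOwnWeak v X) :
    IsOrientation X := by
  intro k e he
  by_contra hke
  have heM : e ∈ M := hX.1 k he
  have hedummy : IsDummyFor (v k) M e := hdummy k e heM hke
  obtain ⟨f, hfM, hfk, j, hjk, hfj⟩ := hshared k
  have hnoenvy : ∀ j, ¬ Envies v X k j := hEFX.2.not_envies he (hedummy.apply_erase (hX.1 k))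
  have hfX : f ∈ X k := hfk.mem_of_forall_not_envies hfM hX hnoenvy
  have hXk : X k = {f} := hEFX.1.eq_singleton_of_priceless hX (hmono j) hfj hfX hjk
  obtain rfl : e = f := mem_singleton.1 (hXk ▸ he)
  exact hfk.not_isDummyFor heM hedummy

/-- If every edge is a good for both endpoints, every agent has an
incident priceless edge, and every priceless edge is priceless to both of its
endpoints, then every EFX⁰₀ allocation is an orientation. -/
theorem stmt8 {V : Type*} [DecidableEq V]
    (M : Finset (Sym2 V)) (v : V → Finset (Sym2 V) → ℝ)
    (hvalid : ValidInstance M v)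
    (hgood : ∀ e ∈ M, ∀ i ∈ e, IsGoodFor (v i) M e)
    (hhas : ∀ i : V, ∃ e ∈ M, i ∈ e ∧ Priceless (v i) M e)
    (hboth : ∀ e ∈ M, ∀ i : V, Priceless (v i) M e → ∀ j ∈ e, Priceless (v j) M e)
    (X : V → Finset (Sym2 V)) (hX : IsAllocation M X)
    (hEFX : CondEnviedWeak v X ∧ CondOwnWeak v X) :
    ∀ i, ∀ e ∈ X i, i ∈ e := by
  exact stmt8_general M v (monotoneOn_of_isGoodFor_of_isDummyFor hgood hvalid.2.2) hvalid.2.2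
    (exists_priceless_and_exists_ne_priceless hvalid.1 hhas hboth) X hX hEFX
end

section
/- For every mixed instance on a simple graph, an EFX^0_- allocation always exists. -/
open Finset

variable {V : Type*} [DecidableEq V]

/-!
Goods come first. Consider partial allocations of goods in which an agent prefers a single edge to
its own bundle only if that edge is some agent's entire bundle. There, an envied agent holds
exactly the edge to its envier, so every agent has at most one envier, and without envy cycles the
envy graph is a forest. Letting the agents pick one best available good each in turn gives such an
allocation, since envy then points only to earlier pickers.

An envied agent `k` can be handed a new bundle while every bundle on the envy path to `k` goes back
to the agent envying it; this keeps the invariant and makes `k` unenvied. If the new bundle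
consists of unallocated and ceded goods and `k` likes it better than its own, then no new envy
arises and fewer agents are envied, so a tight allocation is reached in which no such improvement
is left. If some unallocated item is contested by two envied agents without a common ceder, then
every unenvied agent `r` holds exactly an edge to an envied agent `i` outside the tree of `r`.
Shifting at `i` makes `i` a new root that envies `r`, or else leads to a tight allocation in which
every envied agent has the same ceder. In the first case the tree of `i` strictly contains the old
tree of `r`, which can only happen finitely often.

In the end each remaining item goes to an unenvied agent, which wants it or could cede it to the
agents wanting it, or to an agent whose only envier regards it as a chore. As only the two
endpoints of an item can object to it, this fails at most when an item is incident to all agents,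
and then it is the only item.
-/

section Orders

variable {α β : Type*}

lemma wellFounded_of_forall_ne {r s : α → α → Prop} {k : α} (hr : WellFounded r)
    (hk : ∀ a, ¬ s a k) (hsr : ∀ a b, a ≠ k → s a b → r a b) : WellFounded s := by
  have acc_k : Acc s k := ⟨k, fun a ha => (hk a ha).elim⟩
  refine ⟨fun b => hr.induction b fun b ih => ⟨b, fun a hab => ?_⟩⟩
  by_cases ha : a = k
  · exact ha ▸ acc_k
  · exact ih a (hsr a b ha hab)

lemma rel_of_forall_rel_insert [DecidableEq α] {r : β → β → Prop} [Std.Refl r] [IsTrans β r]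
    {f : Finset α → β} {S T : Finset α} (hST : S ⊆ T)
    (h : ∀ a ∈ T \ S, ∀ U ⊆ T.erase a, r (f U) (f (insert a U))) : r (f S) (f T) := by
  suffices r (f S) (f (S ∪ T \ S)) by rwa [union_sdiff_of_subset hST] at this
  refine Finset.induction_on' (motive := fun D => r (f S) (f (S ∪ D))) (T \ S) ?_
    fun {a D} ha hD haD ih => ?_
  · simpa only [union_empty] using refl_of r (f S)
  · have hU : S ∪ D ⊆ T.erase a := by grind
    exact union_insert a S D ▸ trans_of r ih (h a ha _ hU)

lemma exists_subset_card_le_one_forall_le [LinearOrder β] (f : Finset α → β) (C : Finset α) :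
    ∃ B ⊆ C, #B ≤ 1 ∧ ∀ e ∈ C, f {e} ≤ f B := by
  rcases C.eq_empty_or_nonempty with rfl | hC
  · exact ⟨∅, by simp⟩
  · obtain ⟨b, hb, hmax⟩ := exists_max_image C (fun e => f {e}) hC
    exact ⟨{b}, by simpa using hb, by simp, hmax⟩

lemma eq_singleton_of_card_le_one {S : Finset α} {e : α} (h : #S ≤ 1) (he : e ∈ S) : S = {e} :=
  eq_singleton_iff_unique_mem.2 ⟨he, fun x hx => card_le_one.1 h x hx e he⟩

end Orders

section EFX

variable {M : Finset (Sym2 V)} {v : V → Finset (Sym2 V) → ℝ} {X : V → Finset (Sym2 V)}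
  {i k r u w : V} {e : Sym2 V} {B S T : Finset (Sym2 V)} {f : Finset (Sym2 V) → ℝ}

/-! ### Goods and chores -/

open Classical in
/-- The items of `M` that are goods for the valuation `f`. -/
noncomputable def goods (M : Finset (Sym2 V)) (f : Finset (Sym2 V) → ℝ) : Finset (Sym2 V) :=
  {e ∈ M | IsGoodFor f M e}

open Classical in
/-- The items of `M` that are chores for the valuation `f`. -/
noncomputable def chores (M : Finset (Sym2 V)) (f : Finset (Sym2 V) → ℝ) : Finset (Sym2 V) :=
  {e ∈ M | IsChoreFor f M e}

/-- The agents incident to some item of `M`; only these can have goods or chores. -/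
def incidentAgents (M : Finset (Sym2 V)) : Finset V := M.biUnion Sym2.toFinset

lemma mem_goods : e ∈ goods M f ↔ e ∈ M ∧ IsGoodFor f M e := by
  simp only [goods, mem_filter]

lemma mem_chores : e ∈ chores M f ↔ e ∈ M ∧ IsChoreFor f M e := by
  simp only [chores, mem_filter]

lemma mem_incidentAgents : u ∈ incidentAgents M ↔ ∃ e ∈ M, u ∈ e := by
  simp only [incidentAgents, mem_biUnion, Sym2.mem_toFinset]

lemma goods_subset : goods M f ⊆ M := fun _ he => (mem_goods.1 he).1

lemma disjoint_goods_chores : Disjoint (goods M f) (chores M f) :=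
  disjoint_left.2 fun _ hg hc =>
    ((mem_goods.1 hg).2 ∅ (empty_subset _)).asymm ((mem_chores.1 hc).2 ∅ (empty_subset _))

namespace ValidInstance

lemma mem_of_mem_goods (hv : ValidInstance M v) (he : e ∈ goods M (v i)) : i ∈ e := by
  by_contra hi
  obtain ⟨heM, hgood⟩ := mem_goods.1 he
  exact (hgood ∅ (empty_subset _)).ne' (hv.2.2 i e heM hi ∅ (empty_subset _))

lemma mem_of_mem_chores (hv : ValidInstance M v) (he : e ∈ chores M (v i)) : i ∈ e := by
  by_contra hi
  obtain ⟨heM, hchore⟩ := mem_chores.1 he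
  exact (hchore ∅ (empty_subset _)).ne (hv.2.2 i e heM hi ∅ (empty_subset _))

lemma eq_mk_of_mem_goods (hv : ValidInstance M v) (huw : u ≠ w) (hu : e ∈ goods M (v u))
    (hw : e ∈ goods M (v w)) : e = s(u, w) :=
  (Sym2.mem_and_mem_iff huw).1 ⟨hv.mem_of_mem_goods hu, hv.mem_of_mem_goods hw⟩

lemma goods_eq_empty (hv : ValidInstance M v) (hi : i ∉ incidentAgents M) :
    goods M (v i) = ∅ :=
  eq_empty_of_forall_notMem fun e he =>
    hi (mem_incidentAgents.2 ⟨e, goods_subset he, hv.mem_of_mem_goods he⟩)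

lemma value_le_of_disjoint_chores (hv : ValidInstance M v) (hST : S ⊆ T) (hTM : T ⊆ M)
    (h : Disjoint (T \ S) (chores M (v i))) : v i S ≤ v i T := by
  refine rel_of_forall_rel_insert (r := (· ≤ ·)) hST fun e he U hU => ?_
  have heM : e ∈ M := hTM (mem_sdiff.1 he).1
  have hUM : U ⊆ M.erase e := hU.trans (erase_subset_erase e hTM)
  rcases hv.2.1 i e heM with hgood | hchore | hdummy
  · exact (hgood U hUM).le
  · exact absurd (mem_chores.2 ⟨heM, hchore⟩) (disjoint_left.1 h he)
  · exact (hdummy U hUM).ge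

lemma value_le_of_disjoint_goods (hv : ValidInstance M v) (hST : S ⊆ T) (hTM : T ⊆ M)
    (h : Disjoint (T \ S) (goods M (v i))) : v i T ≤ v i S := by
  refine rel_of_forall_rel_insert (r := (· ≥ ·)) hST fun e he U hU => ?_
  have heM : e ∈ M := hTM (mem_sdiff.1 he).1
  have hUM : U ⊆ M.erase e := hU.trans (erase_subset_erase e hTM)
  rcases hv.2.1 i e heM with hgood | hchore | hdummy
  · exact absurd (mem_goods.2 ⟨heM, hgood⟩) (disjoint_left.1 h he)
  · exact (hchore U hUM).le
  · exact (hdummy U hUM).le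

lemma value_mono_of_subset_goods (hv : ValidInstance M v) (hST : S ⊆ T)
    (hT : T ⊆ goods M (v i)) : v i S ≤ v i T :=
  hv.value_le_of_disjoint_chores hST (hT.trans goods_subset)
    (disjoint_goods_chores.mono_left (sdiff_subset.trans hT))

lemma value_le_value_inter_goods (hv : ValidInstance M v) (hT : T ⊆ M) :
    v i T ≤ v i (T ∩ goods M (v i)) :=
  hv.value_le_of_disjoint_goods inter_subset_left hT (by
    rw [sdiff_inter_self_left]
    exact sdiff_disjoint)

end ValidInstance

/-! ### Envy in stable partial allocations -/

omit [DecidableEq V] in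
lemma Envies.ne (h : Envies v X u w) : u ≠ w := by
  rintro rfl
  exact lt_irrefl _ h

omit [DecidableEq V] in
lemma Envies.congr {Y : V → Finset (Sym2 V)} (h : Envies v X u w) (hu : Y u = X u)
    (hw : Y w = X w) : Envies v Y u w := by
  rwa [Envies, hu, hw]

/-- Agent `k` is envied by someone, i.e. it is not a root of the envy graph. -/
def IsEnvied (v : V → Finset (Sym2 V) → ℝ) (X : V → Finset (Sym2 V)) (k : V) : Prop :=
  ∃ p, Envies v X p k

/-- There is a (possibly trivial) directed path from one agent to another in the envy graph,
whose arcs point from the envious agent to the envied one. -/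
abbrev EnvyPath (v : V → Finset (Sym2 V) → ℝ) (X : V → Finset (Sym2 V)) : V → V → Prop :=
  Relation.ReflTransGen (Envies v X)

/-- A partial allocation of goods in which an agent prefers a single edge to its own bundle only
if that edge is the entire bundle of some agent. -/
structure IsStable (M : Finset (Sym2 V)) (v : V → Finset (Sym2 V) → ℝ)
    (X : V → Finset (Sym2 V)) : Prop where
  subset_goods : ∀ u, X u ⊆ goods M (v u)
  eq_of_mem : ∀ {e u w}, e ∈ X u → e ∈ X w → u = w
  stable : ∀ u, ∀ e ∈ goods M (v u), v u {e} ≤ v u (X u) ∨ ∃ j, X j = {e}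

/-- The stability condition at `X` for agent `u`, should its own bundle be replaced by `S`; the
single edges `u` may still prefer are only those it already envies at `X`. -/
def IsContent (M : Finset (Sym2 V)) (v : V → Finset (Sym2 V) → ℝ) (X : V → Finset (Sym2 V))
    (u : V) (S : Finset (Sym2 V)) : Prop :=
  ∀ e ∈ goods M (v u), v u {e} ≤ v u S ∨ ∃ j, Envies v X u j ∧ X j = {e}

namespace IsStable

lemma subset (hX : IsStable M v X) (u : V) : X u ⊆ M :=
  (hX.subset_goods u).trans goods_subset

lemma value_empty_le (hv : ValidInstance M v) (hX : IsStable M v X) (u : V) :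
    v u ∅ ≤ v u (X u) :=
  hv.value_mono_of_subset_goods (empty_subset _) (hX.subset_goods u)

lemma isContent (hX : IsStable M v X) (u : V) : IsContent M v X u (X u) := by
  refine fun e he => (le_or_gt (v u {e}) (v u (X u))).imp_right fun hlt => ?_
  obtain ⟨j, hj⟩ := (hX.stable u e he).resolve_left hlt.not_ge
  exact ⟨j, by rwa [Envies, hj], hj⟩

lemma eq_of_singleton_of_mem (hX : IsStable M v X) (hu : X u = {e}) (hw : e ∈ X w) : u = w :=
  hX.eq_of_mem (hu ▸ mem_singleton_self e) hw

lemma eq_and_mem_goods_of_envies (hv : ValidInstance M v) (hX : IsStable M v X)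
    (h : Envies v X u w) : X w = {s(u, w)} ∧ s(u, w) ∈ goods M (v u) := by
  have hsub : X w ∩ goods M (v u) ⊆ {s(u, w)} := fun e he =>
    mem_singleton.2 (hv.eq_mk_of_mem_goods h.ne (mem_inter.1 he).2
      (hX.subset_goods w (mem_inter.1 he).1))
  have hlt : v u (X u) < v u (X w ∩ goods M (v u)) :=
    lt_of_lt_of_le h (hv.value_le_value_inter_goods (hX.subset w))
  rcases subset_singleton_iff.1 hsub with hempty | hsingle
  · exact absurd (hX.value_empty_le hv u) (hempty ▸ hlt).not_ge
  · have hmem := mem_inter.1 (hsingle.ge (mem_singleton_self _))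
    obtain ⟨j, hj⟩ := (hX.stable u _ hmem.2).resolve_left (hsingle ▸ hlt).not_ge
    exact ⟨hX.eq_of_singleton_of_mem hj hmem.1 ▸ hj, hmem.2⟩

lemma eq_singleton_of_envies (hv : ValidInstance M v) (hX : IsStable M v X)
    (h : Envies v X u w) : X w = {s(u, w)} :=
  (hX.eq_and_mem_goods_of_envies hv h).1

lemma mem_goods_of_envies (hv : ValidInstance M v) (hX : IsStable M v X)
    (h : Envies v X u w) : s(u, w) ∈ goods M (v u) :=
  (hX.eq_and_mem_goods_of_envies hv h).2

lemma leftUnique_envies (hv : ValidInstance M v) (hX : IsStable M v X) :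
    Relator.LeftUnique (Envies v X) := fun u w u' h h' => by
  have hsingle := (hX.eq_singleton_of_envies hv h).symm.trans (hX.eq_singleton_of_envies hv h')
  exact Sym2.congr_left.1 (singleton_injective hsingle)

lemma mem_incidentAgents_of_isEnvied (hv : ValidInstance M v) (hX : IsStable M v X)
    (hk : IsEnvied v X k) : k ∈ incidentAgents M := by
  obtain ⟨p, hp⟩ := hk
  exact mem_incidentAgents.2
    ⟨s(p, k), goods_subset (hX.mem_goods_of_envies hv hp), Sym2.mem_mk_right p k⟩

lemma finite_setOf_isEnvied (hv : ValidInstance M v) (hX : IsStable M v X) :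
    {k | IsEnvied v X k}.Finite :=
  (incidentAgents M).finite_toSet.subset fun _ hk => hX.mem_incidentAgents_of_isEnvied hv hk

lemma isContent_sdiff_of_disjoint (hX : IsStable M v X) (h : Disjoint (X u) S) :
    IsContent M v X u (X u \ S) :=
  (sdiff_eq_self_of_disjoint h).symm ▸ hX.isContent u

end IsStable

/-- A stable partial allocation without envy cycles. By `IsStable.leftUnique_envies` its envy
graph is a forest. Following envy backwards has to terminate, as there may be infinitely many
agents. -/
structure IsSolid (M : Finset (Sym2 V)) (v : V → Finset (Sym2 V) → ℝ)
    (X : V → Finset (Sym2 V)) : Prop extends IsStable M v X where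
  wellFounded : WellFounded (Envies v X)

namespace IsSolid

lemma not_envyPath_of_envies (hX : IsSolid M v X) (h : Envies v X u w) : ¬ EnvyPath v X w u :=
  fun hpath => hX.wellFounded.transGen.irrefl.irrefl u (Relation.TransGen.head' h hpath)

lemma exists_root (hX : IsSolid M v X) (k : V) : ∃ r, ¬ IsEnvied v X r ∧ EnvyPath v X r k := by
  induction k using hX.wellFounded.induction with
  | _ k ih =>
    by_cases hk : IsEnvied v X k
    · obtain ⟨p, hp⟩ := hk
      obtain ⟨r, hr, hrp⟩ := ih p hp
      exact ⟨r, hr, hrp.tail hp⟩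
    · exact ⟨k, hk, .refl⟩

lemma eq_of_envies_of_envyPath (hv : ValidInstance M v) (hX : IsSolid M v X) {c c' : V}
    (hc : Envies v X u c) (hc' : Envies v X u c') (hck : EnvyPath v X c k)
    (hck' : EnvyPath v X c' k) : c = c' := by
  have eq_of_path {a b : V} (ha : Envies v X u a) (hb : Envies v X u b)
      (hab : EnvyPath v X a b) : a = b := by
    rcases hab.cases_tail with rfl | ⟨d, had, hdb⟩
    · rfl
    · exact absurd (hX.leftUnique_envies hv hdb hb ▸ had) (hX.not_envyPath_of_envies ha)
  have hunique : Relator.RightUnique (Function.swap (Envies v X)) :=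
    fun _ _ _ h h' => hX.leftUnique_envies hv h h'
  rcases Relation.ReflTransGen.total_of_right_unique hunique
    (Relation.reflTransGen_swap.2 hck) (Relation.reflTransGen_swap.2 hck') with h | h
  · exact (eq_of_path hc' hc (Relation.reflTransGen_swap.1 h)).symm
  · exact eq_of_path hc hc' (Relation.reflTransGen_swap.1 h)

end IsSolid

/-! ### Shifting bundles along an envy path -/

open Classical in
/-- Give `B` to `k`, pass each bundle on the envy path leading to `k` back to the agent envying
it, and take the items of `B` away from all agents off the path. -/
noncomputable def shift (v : V → Finset (Sym2 V) → ℝ) (X : V → Finset (Sym2 V)) (k : V)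
    (B : Finset (Sym2 V)) (u : V) : Finset (Sym2 V) :=
  if u = k then B
  else if h : ∃ c, Envies v X u c ∧ EnvyPath v X c k then X h.choose
  else X u \ B

lemma shift_self : shift v X k B k = B := if_pos rfl

lemma shift_of_not_envyPath (hu : ¬ EnvyPath v X u k) : shift v X k B u = X u \ B := by
  have huk : u ≠ k := fun h => hu (h ▸ .refl)
  have hchild : ¬ ∃ c, Envies v X u c ∧ EnvyPath v X c k := fun ⟨_, huc, hck⟩ => hu (.head huc hck)
  rw [shift, if_neg huk, dif_neg hchild]

lemma shift_eq_singleton (hu : ¬ EnvyPath v X u k) (he : e ∉ B) (hXu : X u = {e}) :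
    shift v X k B u = {e} := by
  rw [shift_of_not_envyPath hu, hXu, sdiff_eq_self_of_disjoint (disjoint_singleton_left.2 he)]

lemma mem_shift (he : e ∈ shift v X k B u) :
    u = k ∧ e ∈ B ∨ (∃ c, Envies v X u c ∧ EnvyPath v X c k ∧ e ∈ X c) ∨
      ¬ EnvyPath v X u k ∧ e ∈ X u \ B := by
  rw [shift] at he
  split_ifs at he with huk hchild
  · exact .inl ⟨huk, he⟩
  · exact .inr (.inl ⟨_, hchild.choose_spec.1, hchild.choose_spec.2, he⟩)
  · refine .inr (.inr ⟨fun hpath => ?_, he⟩)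
    exact hpath.cases_head.elim huk hchild

lemma IsSolid.shift_of_envies (hv : ValidInstance M v) (hX : IsSolid M v X) {c : V}
    (huc : Envies v X u c) (hck : EnvyPath v X c k) : shift v X k B u = X c := by
  have huk : u ≠ k := by
    rintro rfl
    exact hX.not_envyPath_of_envies huc hck
  have hchild : ∃ c, Envies v X u c ∧ EnvyPath v X c k := ⟨c, huc, hck⟩
  rw [shift, if_neg huk, dif_pos hchild,
    hX.eq_of_envies_of_envyPath hv hchild.choose_spec.1 huc hchild.choose_spec.2 hck]

/-- Conditions on `B` under which shifting `B` to the envied agent `k` keeps a solid allocation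
solid. -/
structure IsAdmissible (M : Finset (Sym2 V)) (v : V → Finset (Sym2 V) → ℝ)
    (X : V → Finset (Sym2 V)) (k : V) (B : Finset (Sym2 V)) : Prop where
  isEnvied : IsEnvied v X k
  subset_goods : B ⊆ goods M (v k)
  not_isEnvied : ∀ e ∈ B, ∀ u, e ∈ X u → ¬ IsEnvied v X u
  isContent : ∀ u, ¬ EnvyPath v X u k → IsContent M v X u (X u \ B)
  stable : ∀ e ∈ goods M (v k), e ∉ X k →
    v k {e} ≤ v k B ∨ ∃ j, ¬ EnvyPath v X j k ∧ e ∉ B ∧ X j = {e}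

namespace IsAdmissible

lemma notMem_of_envies (hB : IsAdmissible M v X k B) (huw : Envies v X u w) (he : e ∈ X w) :
    e ∉ B :=
  fun heB => hB.not_isEnvied e heB w he ⟨u, huw⟩

lemma shift_subset_goods (hv : ValidInstance M v) (hX : IsSolid M v X)
    (hB : IsAdmissible M v X k B) (u : V) : shift v X k B u ⊆ goods M (v u) := by
  intro e he
  rcases mem_shift he with ⟨rfl, heB⟩ | ⟨c, huc, -, hec⟩ | ⟨-, heu⟩
  · exact hB.subset_goods heB
  · rw [hX.eq_singleton_of_envies hv huc, mem_singleton] at hec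
    exact hec ▸ hX.mem_goods_of_envies hv huc
  · exact hX.subset_goods u (mem_sdiff.1 heu).1

lemma eq_of_mem_shift (hv : ValidInstance M v) (hX : IsSolid M v X)
    (hB : IsAdmissible M v X k B) (hu : e ∈ shift v X k B u) (hw : e ∈ shift v X k B w) :
    u = w := by
  rcases mem_shift hu with ⟨rfl, huB⟩ | ⟨c, huc, hck, hec⟩ | ⟨huk, heu⟩ <;>
    rcases mem_shift hw with ⟨rfl, hwB⟩ | ⟨d, hwd, hdk, hed⟩ | ⟨hwk, hew⟩
  · rfl
  · exact absurd huB (hB.notMem_of_envies hwd hed)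
  · exact absurd huB (mem_sdiff.1 hew).2
  · exact absurd hwB (hB.notMem_of_envies huc hec)
  · obtain rfl := hX.eq_of_mem hec hed
    exact hX.leftUnique_envies hv huc hwd
  · obtain rfl := hX.eq_of_mem hec (mem_sdiff.1 hew).1
    exact absurd hck hwk
  · exact absurd hwB (mem_sdiff.1 heu).2
  · obtain rfl := hX.eq_of_mem hed (mem_sdiff.1 heu).1
    exact absurd hdk huk
  · exact hX.eq_of_mem (mem_sdiff.1 heu).1 (mem_sdiff.1 hew).1

lemma isContent_shift (hv : ValidInstance M v) (hX : IsSolid M v X)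
    (hB : IsAdmissible M v X k B) (huk : u ≠ k) : IsContent M v X u (shift v X k B u) := by
  by_cases hpath : EnvyPath v X u k
  · obtain ⟨c, huc, hck⟩ := hpath.cases_head.resolve_left huk
    rw [hX.shift_of_envies hv huc hck]
    exact fun e he => (hX.isContent u e he).imp_left fun hle => hle.trans huc.le
  · rw [shift_of_not_envyPath hpath]
    exact hB.isContent u hpath

lemma value_le_shift_or_exists (hv : ValidInstance M v) (hX : IsSolid M v X)
    (hB : IsAdmissible M v X k B) (huk : u ≠ k) (he : e ∈ goods M (v u)) :
    v u {e} ≤ v u (shift v X k B u) ∨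
      ∃ j, Envies v X u j ∧ ¬ EnvyPath v X j k ∧ shift v X k B j = {e} := by
  rcases hB.isContent_shift hv hX huk e he with hle | ⟨j, huj, hj⟩
  · exact .inl hle
  by_cases hpath : EnvyPath v X j k
  · exact .inl (by rw [hX.shift_of_envies hv huj hpath, hj])
  · have he : e ∉ B := hB.notMem_of_envies huj (hj ▸ mem_singleton_self e)
    exact .inr ⟨j, huj, hpath, shift_eq_singleton hpath he hj⟩

lemma isStable_shift (hv : ValidInstance M v) (hX : IsSolid M v X)
    (hB : IsAdmissible M v X k B) : IsStable M v (shift v X k B) where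
  subset_goods := hB.shift_subset_goods hv hX
  eq_of_mem := hB.eq_of_mem_shift hv hX
  stable u e he := by
    rcases eq_or_ne u k with rfl | huk
    · obtain ⟨p, hp⟩ := hB.isEnvied
      by_cases heX : e ∈ X u
      · have hXu := hX.eq_singleton_of_envies hv hp
        obtain rfl := mem_singleton.1 (hXu ▸ heX)
        exact .inr ⟨p, by rw [hX.shift_of_envies hv hp .refl, hXu]⟩
      · refine (hB.stable e he heX).imp (fun hle => by rwa [shift_self])
          fun ⟨j, hpath, heB, hj⟩ => ⟨j, shift_eq_singleton hpath heB hj⟩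
    · exact (hB.value_le_shift_or_exists hv hX huk he).imp_right fun ⟨j, _, _, hj⟩ => ⟨j, hj⟩

lemma envies_of_envies_shift (hv : ValidInstance M v) (hX : IsSolid M v X)
    (hB : IsAdmissible M v X k B) (huk : u ≠ k) (h : Envies v (shift v X k B) u w) :
    Envies v X u w ∧ ¬ EnvyPath v X w k := by
  have hY := hB.isStable_shift hv hX
  obtain ⟨hw, hgood⟩ := hY.eq_and_mem_goods_of_envies hv h
  rcases hB.value_le_shift_or_exists hv hX huk hgood with hle | ⟨j, huj, hpath, hj⟩
  · exact absurd (hw ▸ hle) h.not_ge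
  · obtain rfl := hY.eq_of_singleton_of_mem hj (hw ▸ mem_singleton_self _)
    exact ⟨huj, hpath⟩

lemma envies_of_envies_shift_of_le (hv : ValidInstance M v) (hX : IsSolid M v X)
    (hB : IsAdmissible M v X k B) (hle : v k (X k) ≤ v k B) (h : Envies v (shift v X k B) u w) :
    Envies v X u w ∧ ¬ EnvyPath v X w k := by
  rcases ne_or_eq u k with huk | rfl
  · exact hB.envies_of_envies_shift hv hX huk h
  have hY := hB.isStable_shift hv hX
  obtain ⟨hw, hgood⟩ := hY.eq_and_mem_goods_of_envies hv h
  have hlt : v u (X u) < v u {s(u, w)} := by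
    rw [Envies, shift_self, hw] at h
    exact hle.trans_lt h
  obtain ⟨j, huj, hj⟩ := (hX.isContent u _ hgood).resolve_left hlt.not_ge
  have hpath : ¬ EnvyPath v X j u := hX.not_envyPath_of_envies huj
  have hnotMem := hB.notMem_of_envies huj (hj ▸ mem_singleton_self _)
  obtain rfl := hY.eq_of_singleton_of_mem (shift_eq_singleton hpath hnotMem hj)
    (hw ▸ mem_singleton_self _)
  exact ⟨huj, hpath⟩

lemma not_isEnvied_shift (hv : ValidInstance M v) (hX : IsSolid M v X)
    (hB : IsAdmissible M v X k B) : ¬ IsEnvied v (shift v X k B) k :=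
  fun ⟨_, hu⟩ => (hB.envies_of_envies_shift hv hX hu.ne hu).2 .refl

lemma isSolid_shift (hv : ValidInstance M v) (hX : IsSolid M v X)
    (hB : IsAdmissible M v X k B) : IsSolid M v (shift v X k B) where
  toIsStable := hB.isStable_shift hv hX
  wellFounded := wellFounded_of_forall_ne hX.wellFounded
    (fun u hu => hB.not_isEnvied_shift hv hX ⟨u, hu⟩)
    fun _ _ huk hu => (hB.envies_of_envies_shift hv hX huk hu).1

end IsAdmissible

/-! ### Ceding goods to envied agents -/

open Classical in
/-- The items of `M` held by nobody. -/
noncomputable def unallocated (M : Finset (Sym2 V)) (X : V → Finset (Sym2 V)) :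
    Finset (Sym2 V) :=
  {e ∈ M | ∀ u, e ∉ X u}

/-- The unenvied agent `r` can part with all goods of `k` in its bundle: either it receives
another bundle in a shift to `k`, or the rest of its bundle still makes it content. -/
def CanCede (M : Finset (Sym2 V)) (v : V → Finset (Sym2 V) → ℝ) (X : V → Finset (Sym2 V))
    (r k : V) : Prop :=
  ¬ IsEnvied v X r ∧ (EnvyPath v X r k ∨ IsContent M v X r (X r \ goods M (v k)))

/-- The goods of `k` that are unallocated or held by `r`. -/
noncomputable def claim (M : Finset (Sym2 V)) (v : V → Finset (Sym2 V) → ℝ)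
    (X : V → Finset (Sym2 V)) (r k : V) : Finset (Sym2 V) :=
  (unallocated M X ∪ X r) ∩ goods M (v k)

/-- No envied agent prefers its claim on an agent that can cede to it to its own bundle. -/
def IsTight (M : Finset (Sym2 V)) (v : V → Finset (Sym2 V) → ℝ) (X : V → Finset (Sym2 V)) :
    Prop :=
  ∀ k r, IsEnvied v X k → CanCede M v X r k → v k (claim M v X r k) ≤ v k (X k)

/-- Any two envied agents competing for an unallocated item have an agent that can cede to
both. -/
def HasCommonCeder (M : Finset (Sym2 V)) (v : V → Finset (Sym2 V) → ℝ)
    (X : V → Finset (Sym2 V)) : Prop :=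
  ∀ e ∈ unallocated M X, ∀ i j, i ≠ j → e ∈ goods M (v i) → e ∈ goods M (v j) →
    IsEnvied v X i → IsEnvied v X j → ∃ r, CanCede M v X r i ∧ CanCede M v X r j

/-- A single agent can cede to every envied agent. -/
def HasUniversalCeder (M : Finset (Sym2 V)) (v : V → Finset (Sym2 V) → ℝ)
    (X : V → Finset (Sym2 V)) : Prop :=
  ∃ d, ∀ k, IsEnvied v X k → CanCede M v X d k

/-- A solid partial allocation to which all remaining items can be added. -/
structure IsCompletable (M : Finset (Sym2 V)) (v : V → Finset (Sym2 V) → ℝ)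
    (X : V → Finset (Sym2 V)) : Prop extends IsSolid M v X where
  isTight : IsTight M v X
  hasCommonCeder : HasCommonCeder M v X

omit [DecidableEq V] in
lemma mem_unallocated : e ∈ unallocated M X ↔ e ∈ M ∧ ∀ u, e ∉ X u := by
  simp only [unallocated, mem_filter]

lemma mem_claim : e ∈ claim M v X r k ↔ (e ∈ unallocated M X ∨ e ∈ X r) ∧ e ∈ goods M (v k) := by
  rw [claim, mem_inter, mem_union]

lemma HasUniversalCeder.hasCommonCeder (h : HasUniversalCeder M v X) : HasCommonCeder M v X :=
  fun _ _ i j _ _ _ hi hj => h.imp fun _ hd => ⟨hd i hi, hd j hj⟩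

lemma IsStable.hasUniversalCeder (hv : ValidInstance M v) (hX : IsStable M v X) {d q : V}
    (hd : ¬ IsEnvied v X d) (hq : ¬ IsEnvied v X q) (h : X d = {s(d, q)}) :
    HasUniversalCeder M v X := by
  refine ⟨d, fun k hk => ⟨hd, .inr (hX.isContent_sdiff_of_disjoint ?_)⟩⟩
  rw [h, disjoint_singleton_left]
  intro hgood
  rcases Sym2.mem_iff.1 (hv.mem_of_mem_goods hgood) with rfl | rfl
  · exact hd hk
  · exact hq hk

namespace IsSolid

lemma isAdmissible_claim (hX : IsSolid M v X) (hk : IsEnvied v X k) (hr : CanCede M v X r k)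
    (hle : v k (X k) ≤ v k (claim M v X r k)) : IsAdmissible M v X k (claim M v X r k) := by
  have eq_of_mem {u : V} {e : Sym2 V} (he : e ∈ claim M v X r k) (heu : e ∈ X u) : u = r :=
    (mem_claim.1 he).1.elim (fun hun => absurd heu ((mem_unallocated.1 hun).2 u))
      fun her => hX.eq_of_mem heu her
  refine ⟨hk, inter_subset_right, fun e he u heu => eq_of_mem he heu ▸ hr.1, fun u hu => ?_,
    fun e he _ => ?_⟩
  · rcases eq_or_ne u r with rfl | hur
    · have hrest : X u \ claim M v X u k = X u \ goods M (v k) := by grind [claim]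
      exact hrest ▸ hr.2.resolve_left hu
    · exact hX.isContent_sdiff_of_disjoint (disjoint_left.2 fun e heu he => hur (eq_of_mem he heu))
  · refine (hX.isContent k e he).imp (fun h => h.trans hle) ?_
    rintro ⟨j, hkj, hj⟩
    refine ⟨j, hX.not_envyPath_of_envies hkj, fun heclaim => ?_, hj⟩
    exact hr.1 (eq_of_mem heclaim (hj ▸ mem_singleton_self e) ▸ ⟨k, hkj⟩)

lemma exists_isEnvied_ssubset (hv : ValidInstance M v) (hX : IsSolid M v X)
    (hT : ¬ IsTight M v X) : ∃ Y, IsSolid M v Y ∧ HasUniversalCeder M v Y ∧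
      {u | IsEnvied v Y u} ⊂ {u | IsEnvied v X u} := by
  simp only [IsTight, not_forall, not_le] at hT
  obtain ⟨k, r, hk, hr, hlt⟩ := hT
  have hB := hX.isAdmissible_claim hk hr hlt.le
  have hY := hB.isSolid_shift hv hX
  have hkY := hB.not_isEnvied_shift hv hX
  have envies_of_envies {u w : V} := hB.envies_of_envies_shift_of_le hv hX hlt.le (u := u) (w := w)
  refine ⟨_, hY, ?_, fun w ⟨u, hu⟩ => ⟨u, (envies_of_envies hu).1⟩, fun hsub => hkY (hsub hk)⟩
  obtain ⟨p, hp⟩ := hk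
  refine hY.hasUniversalCeder hv (d := p) (q := k)
    (fun ⟨u, hu⟩ => (envies_of_envies hu).2 (.single hp)) hkY ?_
  rw [hX.shift_of_envies hv hp .refl, hX.eq_singleton_of_envies hv hp]

lemma exists_isCompletable (hv : ValidInstance M v) (hX : IsSolid M v X)
    (hU : HasUniversalCeder M v X) : ∃ Y, IsCompletable M v Y := by
  induction hn : {u | IsEnvied v X u}.ncard using Nat.strong_induction_on generalizing X with
  | _ n ih =>
    by_cases hT : IsTight M v X
    · exact ⟨X, hX, hT, hU.hasCommonCeder⟩
    · obtain ⟨Y, hY, hYU, hlt⟩ := hX.exists_isEnvied_ssubset hv hT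
      exact ih _ (hn ▸ Set.ncard_lt_ncard hlt (hX.finite_setOf_isEnvied hv)) hY hYU rfl

end IsSolid

/-! ### Serial dictatorship -/

lemma goods_zero : goods M 0 = ∅ :=
  eq_empty_of_forall_notMem fun _ he => lt_irrefl _ ((mem_goods.1 he).2 ∅ (empty_subset _))

lemma ValidInstance.update_zero (hv : ValidInstance M v) (a : V) :
    ValidInstance M (Function.update v a 0) := by
  refine ⟨hv.1, fun i e he => ?_, fun i e he hi => ?_⟩ <;> rcases eq_or_ne i a with rfl | hia
  · simp [IsDummyFor]
  · simpa only [Function.update_of_ne hia] using hv.2.1 i e he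
  · simp [IsDummyFor]
  · simpa only [Function.update_of_ne hia] using hv.2.2 i e he hi

namespace IsStable

lemma eq_empty_of_update_zero {a : V} (hX : IsStable M (Function.update v a 0) X) : X a = ∅ := by
  simpa [goods_zero] using hX.subset_goods a

lemma value_le_or_exists_of_update_zero {a : V} (hX : IsStable M (Function.update v a 0) X)
    (hu : u ≠ a) (he : e ∈ goods M (v u)) : v u {e} ≤ v u (X u) ∨ ∃ j, X j = {e} := by
  simpa only [Function.update_of_ne hu] using hX.stable u e (by rwa [Function.update_of_ne hu])

lemma isStable_update {a : V} (hX : IsStable M (Function.update v a 0) X)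
    (hcard : ∀ u, #(X u) ≤ 1) (hB : B ⊆ goods M (v a) ∩ unallocated M X)
    (hmax : ∀ e ∈ goods M (v a) ∩ unallocated M X, v a {e} ≤ v a B) :
    IsStable M v (Function.update X a B) := by
  have update_eq {j : V} {e : Sym2 V} (hj : X j = {e}) : Function.update X a B j = {e} := by
    have hja : j ≠ a := by
      rintro rfl
      exact singleton_ne_empty e (hj ▸ hX.eq_empty_of_update_zero)
    rwa [Function.update_of_ne hja]
  refine ⟨fun u => ?_, fun {e u w} hu hw => ?_, fun u e he => ?_⟩
  · rcases eq_or_ne u a with rfl | hua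
    · exact (Function.update_self u B X).symm ▸ hB.trans inter_subset_left
    · simpa only [Function.update_of_ne hua] using hX.subset_goods u
  · have := hX.eq_of_mem (e := e) (u := u) (w := w)
    grind [mem_unallocated]
  · rcases eq_or_ne u a with rfl | hua
    · by_cases hun : e ∈ unallocated M X
      · exact .inl (by rw [Function.update_self]; exact hmax e (mem_inter.2 ⟨he, hun⟩))
      · obtain ⟨j, hej⟩ : ∃ j, e ∈ X j := by
          simpa [mem_unallocated, goods_subset he] using hun
        exact .inr ⟨j, update_eq (eq_singleton_of_card_le_one (hcard j) hej)⟩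
    · rw [Function.update_of_ne hua]
      exact (hX.value_le_or_exists_of_update_zero hua he).imp_right fun ⟨j, hj⟩ =>
        ⟨j, update_eq hj⟩

end IsStable

lemma IsSolid.isSolid_update (hv : ValidInstance M v) {a : V}
    (hX : IsSolid M (Function.update v a 0) X) (hB : B ⊆ unallocated M X)
    (hY : IsStable M v (Function.update X a B)) : IsSolid M v (Function.update X a B) := by
  have not_envies (u : V) : ¬ Envies v (Function.update X a B) u a := fun h => by
    have hua := h.ne
    obtain ⟨hsingle, hgood⟩ := hY.eq_and_mem_goods_of_envies hv h
    rw [Envies, hsingle, Function.update_of_ne (a := u) hua] at h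
    obtain ⟨j, hj⟩ := (hX.value_le_or_exists_of_update_zero hua hgood).resolve_left h.not_ge
    have hunallocated : s(u, a) ∈ unallocated M X := by
      rw [Function.update_self] at hsingle
      exact hB (hsingle ▸ mem_singleton_self _)
    exact (mem_unallocated.1 hunallocated).2 j (hj ▸ mem_singleton_self _)
  refine ⟨hY, wellFounded_of_forall_ne hX.wellFounded not_envies fun u w hua h => ?_⟩
  have hwa : w ≠ a := by
    rintro rfl
    exact not_envies u h
  simpa only [Envies, Function.update_of_ne hua, Function.update_of_ne hwa] using h

lemma ValidInstance.exists_isSolid_of_goods_eq_empty (S : Finset V) (hv : ValidInstance M v)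
    (hS : ∀ u ∉ S, goods M (v u) = ∅) : ∃ X, IsSolid M v X ∧ ∀ u, #(X u) ≤ 1 := by
  induction S using Finset.induction_on generalizing v with
  | empty =>
    refine ⟨fun _ => ∅, ⟨⟨by simp, by simp, fun u e he => ?_⟩, ⟨fun w => ⟨w, ?_⟩⟩⟩, by simp⟩
    · simp [hS u (notMem_empty u)] at he
    · exact fun u h => absurd h (lt_irrefl _)
  | insert a S _ ih =>
    obtain ⟨X, hX, hcard⟩ := ih (hv.update_zero a) fun u hu => by
      rcases eq_or_ne u a with rfl | hua
      · rw [Function.update_self, goods_zero]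
      · rw [Function.update_of_ne hua, hS u (by simp [hua, hu])]
    obtain ⟨B, hB, hB1, hmax⟩ :=
      exists_subset_card_le_one_forall_le (v a) (goods M (v a) ∩ unallocated M X)
    have hY := hX.isStable_update hcard hB hmax
    refine ⟨_, hX.isSolid_update hv (hB.trans inter_subset_right) hY, fun u => ?_⟩
    rcases eq_or_ne u a with rfl | hua
    · rwa [Function.update_self]
    · rw [Function.update_of_ne hua]
      exact hcard u

/-! ### Reaching a completable allocation -/

lemma IsStable.setOf_envyPath_subset (hv : ValidInstance M v) (hX : IsStable M v X) (r : V) :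
    {w | EnvyPath v X r w} ⊆ (insert r (incidentAgents M) : Finset V) := by
  intro w hw
  rcases Relation.ReflTransGen.cases_tail hw with rfl | ⟨p, -, hp⟩
  · exact mem_insert_self ..
  · exact mem_insert_of_mem (hX.mem_incidentAgents_of_isEnvied hv ⟨p, hp⟩)

lemma card_shift_le_one (hcard : ∀ u, #(X u) ≤ 1) (hB : #B ≤ 1) (u : V) :
    #(shift v X k B u) ≤ 1 := by
  rw [shift]
  split_ifs
  · exact hB
  · exact hcard _
  · exact (card_le_card sdiff_subset).trans (hcard u)

namespace IsSolid

lemma exists_isAdmissible_card_le_one (hv : ValidInstance M v) (hX : IsSolid M v X)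
    (hcard : ∀ u, #(X u) ≤ 1) (hk : IsEnvied v X k) :
    ∃ B, IsAdmissible M v X k B ∧ #B ≤ 1 ∧ ∀ u, ¬ EnvyPath v X u k → Disjoint (X u) B := by
  classical
  obtain ⟨B, hB, hB1, hmax⟩ := exists_subset_card_le_one_forall_le (v k)
    {e ∈ goods M (v k) | ∀ u, e ∈ X u → EnvyPath v X u k ∧ ¬ IsEnvied v X u}
  have of_mem {e : Sym2 V} (he : e ∈ B) {u : V} (heu : e ∈ X u) :
      EnvyPath v X u k ∧ ¬ IsEnvied v X u := (mem_filter.1 (hB he)).2 u heu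
  have hdisj (u : V) (hu : ¬ EnvyPath v X u k) : Disjoint (X u) B :=
    disjoint_left.2 fun e heu he => hu (of_mem he heu).1
  refine ⟨B, ⟨hk, hB.trans (filter_subset _ _), fun e he u heu => (of_mem he heu).2,
    fun u hu => hX.isContent_sdiff_of_disjoint (hdisj u hu), fun e he hek => ?_⟩, hB1, hdisj⟩
  by_cases hfree : ∀ u, e ∈ X u → EnvyPath v X u k ∧ ¬ IsEnvied v X u
  · exact .inl (hmax e (mem_filter.2 ⟨he, hfree⟩))
  push Not at hfree
  obtain ⟨u, heu, henv⟩ := hfree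
  have hpath : ¬ EnvyPath v X u k := fun hpath => by
    obtain ⟨q, hq⟩ := henv hpath
    obtain rfl : e = s(q, u) := mem_singleton.1 (hX.eq_singleton_of_envies hv hq ▸ heu)
    rcases Sym2.mem_iff.1 (hv.mem_of_mem_goods he) with rfl | rfl
    · exact hX.not_envyPath_of_envies hq hpath
    · exact hek heu
  exact .inr ⟨u, hpath, fun heB => hpath (of_mem heB heu).1,
    eq_singleton_of_card_le_one (hcard u) heu⟩

lemma exists_isEnvied_of_not_hasCommonCeder (hv : ValidInstance M v) (hX : IsSolid M v X)
    (hcard : ∀ u, #(X u) ≤ 1) (hcomm : ¬ HasCommonCeder M v X) (hr : ¬ IsEnvied v X r) :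
    ∃ i, IsEnvied v X i ∧ X r = {s(r, i)} ∧ ¬ EnvyPath v X r i := by
  obtain ⟨i, hi, hcede⟩ : ∃ i, IsEnvied v X i ∧ ¬ CanCede M v X r i := by
    by_contra! h
    exact hcomm (HasUniversalCeder.hasCommonCeder ⟨r, h⟩)
  refine ⟨i, hi, ?_, fun hpath => hcede ⟨hr, .inl hpath⟩⟩
  obtain ⟨e, her, hei⟩ : ∃ e ∈ X r, e ∈ goods M (v i) := by
    rw [← not_disjoint_iff]
    exact fun h => hcede ⟨hr, .inr (hX.isContent_sdiff_of_disjoint h)⟩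
  have hri : r ≠ i := fun h => hr (h ▸ hi)
  rw [← hv.eq_mk_of_mem_goods hri (hX.subset_goods r her) hei]
  exact eq_singleton_of_card_le_one (hcard r) her

lemma exists_envyPath_ssubset (hv : ValidInstance M v) (hX : IsSolid M v X)
    (hcard : ∀ u, #(X u) ≤ 1) (hno : ¬ ∃ Y, IsCompletable M v Y)
    (hi : IsEnvied v X i) (hXr : X r = {s(r, i)}) (hri : ¬ EnvyPath v X r i)
    (hr : ¬ IsEnvied v X r) :
    ∃ Y, IsSolid M v Y ∧ (∀ u, #(Y u) ≤ 1) ∧ ¬ IsEnvied v Y i ∧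
      {w | EnvyPath v X r w} ⊂ {w | EnvyPath v Y i w} := by
  obtain ⟨B, hB, hB1, hdisj⟩ := hX.exists_isAdmissible_card_le_one hv hcard hi
  have hY := hB.isSolid_shift hv hX
  have hiY := hB.not_isEnvied_shift hv hX
  have shift_eq {u : V} (hu : EnvyPath v X r u) : shift v X i B u = X u := by
    have hui : ¬ EnvyPath v X u i := fun h => hri (hu.trans h)
    rw [shift_of_not_envyPath hui, sdiff_eq_self_of_disjoint (hdisj u hui)]
  have hrY : IsEnvied v (shift v X i B) r := by
    by_contra hrY
    exact hno (hY.exists_isCompletable hv (hY.hasUniversalCeder hv hrY hiY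
      (shift_eq .refl ▸ hXr)))
  have hir : Envies v (shift v X i B) i r := by
    obtain ⟨p, hp⟩ := hrY
    by_cases hpi : p = i
    · exact hpi ▸ hp
    · exact absurd ⟨p, (hB.envies_of_envies_shift hv hX hpi hp).1⟩ hr
  refine ⟨_, hY, card_shift_le_one hcard hB1, hiY, fun w hw => ?_, fun hsub => hri (hsub .refl)⟩
  refine Relation.ReflTransGen.head hir ?_
  induction hw with
  | refl => exact .refl
  | tail hru huw ih => exact ih.tail (huw.congr (shift_eq hru) (shift_eq (hru.tail huw)))

end IsSolid

lemma ValidInstance.exists_isCompletable (hv : ValidInstance M v) : ∃ X, IsCompletable M v X := by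
  by_contra hno
  have hcomm {X : V → Finset (Sym2 V)} (hX : IsSolid M v X) : ¬ HasCommonCeder M v X := by
    refine fun hcomm => hno ⟨X, hX, by_contra fun hT => ?_, hcomm⟩
    obtain ⟨Y, hY, hYU, -⟩ := hX.exists_isEnvied_ssubset hv hT
    exact hno (hY.exists_isCompletable hv hYU)
  obtain ⟨X₀, hX₀, hcard₀⟩ := hv.exists_isSolid_of_goods_eq_empty (incidentAgents M)
    fun u hu => hv.goods_eq_empty hu
  have unbounded (n : ℕ) : ∃ X r, IsSolid M v X ∧ (∀ u, #(X u) ≤ 1) ∧ ¬ IsEnvied v X r ∧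
      n ≤ {w | EnvyPath v X r w}.ncard := by
    induction n with
    | zero =>
      obtain ⟨i⟩ : Nonempty V := by
        by_contra hV
        exact hcomm hX₀ fun _ _ i => (hV ⟨i⟩).elim
      obtain ⟨r, hr, -⟩ := hX₀.exists_root i
      exact ⟨X₀, r, hX₀, hcard₀, hr, Nat.zero_le _⟩
    | succ n ih =>
      obtain ⟨X, r, hX, hcard, hr, hn⟩ := ih
      obtain ⟨i, hi, hXr, hri⟩ := hX.exists_isEnvied_of_not_hasCommonCeder hv hcard (hcomm hX) hr
      obtain ⟨Y, hY, hcardY, hiY, hlt⟩ := hX.exists_envyPath_ssubset hv hcard hno hi hXr hri hr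
      exact ⟨Y, i, hY, hcardY, hiY,
        hn.trans_lt (Set.ncard_lt_ncard hlt
          ((finite_toSet _).subset (hY.setOf_envyPath_subset hv i)))⟩
  obtain ⟨X, r, hX, -, -, hn⟩ := unbounded (#(incidentAgents M) + 2)
  have hle := Set.ncard_le_ncard (hX.setOf_envyPath_subset hv r)
  rw [Set.ncard_coe_finset] at hle
  have hinsert := card_insert_le r (incidentAgents M)
  omega

/-! ### Completing the allocation -/

/-- Agents to which the unallocated item `e` can be added: an unenvied agent for which it is a
good; or, if all agents wanting `e` are envied, an unenvied agent for which it is not a chore and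
which can cede to all of them, or an agent envied by someone for whom it is a chore. -/
inductive IsReceiver (M : Finset (Sym2 V)) (v : V → Finset (Sym2 V) → ℝ)
    (X : V → Finset (Sym2 V)) (g : V) (e : Sym2 V) : Prop
  | good (hg : ¬ IsEnvied v X g) (he : e ∈ goods M (v g))
  | ceder (hg : ¬ IsEnvied v X g) (he : e ∉ chores M (v g))
      (h : ∀ k, e ∈ goods M (v k) → IsEnvied v X k ∧ CanCede M v X g k)
  | chore {p : V} (hp : Envies v X p g) (he : e ∈ chores M (v p))
      (h : ∀ k, e ∈ goods M (v k) → IsEnvied v X k)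

lemma IsStable.mem_chores_of_isReceiver (hv : ValidInstance M v) (hX : IsStable M v X)
    {p g : V} (hp : Envies v X p g) (he : IsReceiver M v X g e) :
    e ∈ chores M (v p) ∧ ∀ k, e ∈ goods M (v k) → IsEnvied v X k := by
  rcases he with ⟨hg, -⟩ | ⟨hg, -, -⟩ | ⟨hq, he, h⟩
  · exact absurd ⟨p, hp⟩ hg
  · exact absurd ⟨p, hp⟩ hg
  · exact hX.leftUnique_envies hv hp hq ▸ ⟨he, h⟩

lemma IsSolid.exists_isReceiver_of_forall_eq (hX : IsSolid M v X) (hk : e ∉ chores M (v k))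
    (h : ∀ u, e ∈ goods M (v u) → u = k ∧ IsEnvied v X u) : ∃ g, IsReceiver M v X g e := by
  obtain ⟨r, hr, hpath⟩ := hX.exists_root k
  by_cases he : e ∈ chores M (v r)
  · have hrk : r ≠ k := fun hrk => hk (hrk ▸ he)
    obtain ⟨c, hc, -⟩ := hpath.cases_head.resolve_left hrk
    exact ⟨c, .chore hc he fun u hu => (h u hu).2⟩
  · refine ⟨r, .ceder hr he fun u hu => ?_⟩
    obtain ⟨rfl, henv⟩ := h u hu
    exact ⟨henv, hr, .inl hpath⟩

namespace IsCompletable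

lemma exists_isReceiver (hv : ValidInstance M v) (hX : IsCompletable M v X)
    (he : e ∈ unallocated M X) (hk : k ∉ e) : ∃ g, IsReceiver M v X g e := by
  by_cases hgood : ∃ g, ¬ IsEnvied v X g ∧ e ∈ goods M (v g)
  · exact hgood.imp fun g hg => .good hg.1 hg.2
  have henv (u : V) (hu : e ∈ goods M (v u)) : IsEnvied v X u :=
    by_contra fun h => hgood ⟨u, h, hu⟩
  by_cases hone : ∃ x, e ∈ goods M (v x)
  · obtain ⟨x, hx⟩ := hone
    by_cases htwo : ∃ y, x ≠ y ∧ e ∈ goods M (v y)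
    · obtain ⟨y, hxy, hy⟩ := htwo
      obtain ⟨r, hrx, hry⟩ := hX.hasCommonCeder e he x y hxy hx hy (henv x hx) (henv y hy)
      have cede {u : V} (hu : u ∈ e) : IsEnvied v X u ∧ CanCede M v X r u := by
        rw [hv.eq_mk_of_mem_goods hxy hx hy, Sym2.mem_iff] at hu
        rcases hu with rfl | rfl
        · exact ⟨henv _ hx, hrx⟩
        · exact ⟨henv _ hy, hry⟩
      exact ⟨r, .ceder hrx.1 (fun hr => hrx.1 (cede (hv.mem_of_mem_chores hr)).1)
        fun u hu => cede (hv.mem_of_mem_goods hu)⟩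
    · refine hX.exists_isReceiver_of_forall_eq (k := x)
        (disjoint_left.1 disjoint_goods_chores hx) fun u hu => ⟨?_, henv u hu⟩
      exact by_contra fun hux => htwo ⟨u, Ne.symm hux, hu⟩
  · exact hX.exists_isReceiver_of_forall_eq (fun h => hk (hv.mem_of_mem_chores h))
      fun u hu => (hone ⟨u, hu⟩).elim

lemma value_le_of_subset_claim (hv : ValidInstance M v) (hX : IsCompletable M v X)
    (hk : IsEnvied v X k) (hr : CanCede M v X r k) (hT : T ⊆ M)
    (h : T ∩ goods M (v k) ⊆ claim M v X r k) : v k T ≤ v k (X k) :=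
  calc v k T ≤ v k (T ∩ goods M (v k)) := hv.value_le_value_inter_goods hT
    _ ≤ v k (claim M v X r k) := hv.value_mono_of_subset_goods h inter_subset_right
    _ ≤ v k (X k) := hX.isTight k r hk hr

end IsCompletable

/-- Add every unallocated item `e` to the bundle of the agent `ψ e`. -/
noncomputable def completion (M : Finset (Sym2 V)) (X : V → Finset (Sym2 V)) (ψ : Sym2 V → V)
    (g : V) : Finset (Sym2 V) :=
  X g ∪ {e ∈ unallocated M X | ψ e = g}

variable {ψ : Sym2 V → V} {g p : V}

lemma mem_completion : e ∈ completion M X ψ g ↔ e ∈ X g ∨ e ∈ unallocated M X ∧ ψ e = g := by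
  rw [completion, mem_union, mem_filter]

lemma subset_completion : X g ⊆ completion M X ψ g := subset_union_left

lemma isReceiver_of_mem_completion (hψ : ∀ e ∈ unallocated M X, IsReceiver M v X (ψ e) e)
    (he : e ∈ completion M X ψ g) (heX : e ∉ X g) :
    e ∈ unallocated M X ∧ IsReceiver M v X g e := by
  obtain ⟨hun, rfl⟩ := (mem_completion.1 he).resolve_left heX
  exact ⟨hun, hψ e hun⟩

lemma condOwnStrict_of_disjoint_chores (hv : ValidInstance M v) {Y : V → Finset (Sym2 V)}
    (hYM : ∀ u, Y u ⊆ M) (hY : ∀ u, Disjoint (Y u) (chores M (v u))) : CondOwnStrict v Y := by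
  intro i _ _ e _ hlt
  exact absurd (hv.value_le_of_disjoint_chores (erase_subset e (Y i)) (hYM i)
    ((hY i).mono_left sdiff_subset)) hlt.not_ge

namespace IsStable

lemma isAllocation_completion (hX : IsStable M v X) : IsAllocation M (completion M X ψ) := by
  refine ⟨fun g e he => ?_, fun e he => ?_⟩
  · exact (mem_completion.1 he).elim (fun h => hX.subset g h) fun h => (mem_unallocated.1 h.1).1
  · simp only [mem_completion]
    by_cases hun : e ∈ unallocated M X
    · exact ⟨ψ e, .inr ⟨hun, rfl⟩, fun w hw =>
        (hw.resolve_left ((mem_unallocated.1 hun).2 w)).2.symm⟩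
    · obtain ⟨u, hu⟩ : ∃ u, e ∈ X u := by simpa [mem_unallocated, he] using hun
      exact ⟨u, .inl hu, fun w hw => hX.eq_of_mem (hw.resolve_right fun h => hun h.1) hu⟩

lemma disjoint_completion_chores (hv : ValidInstance M v) (hX : IsStable M v X)
    (hψ : ∀ e ∈ unallocated M X, IsReceiver M v X (ψ e) e) (g : V) :
    Disjoint (completion M X ψ g) (chores M (v g)) := by
  refine disjoint_left.2 fun e he hchore => ?_
  by_cases heX : e ∈ X g
  · exact disjoint_left.1 disjoint_goods_chores (hX.subset_goods g heX) hchore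
  rcases (isReceiver_of_mem_completion hψ he heX).2 with ⟨-, hgood⟩ | ⟨-, hnot, -⟩ | ⟨hp, hp', -⟩
  · exact disjoint_left.1 disjoint_goods_chores hgood hchore
  · exact hnot hchore
  · refine heX (hX.eq_singleton_of_envies hv hp ▸ mem_singleton.2 ?_)
    exact (Sym2.mem_and_mem_iff hp.ne).1 ⟨hv.mem_of_mem_chores hp', hv.mem_of_mem_chores hchore⟩

lemma value_le_completion (hv : ValidInstance M v) (hX : IsStable M v X)
    (hψ : ∀ e ∈ unallocated M X, IsReceiver M v X (ψ e) e) (k : V) :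
    v k (X k) ≤ v k (completion M X ψ k) :=
  hv.value_le_of_disjoint_chores subset_completion (hX.isAllocation_completion.1 k)
    ((hX.disjoint_completion_chores hv hψ k).mono_left sdiff_subset)

lemma value_le_bundle_of_disjoint_goods (hv : ValidInstance M v) (hX : IsStable M v X) (hT : T ⊆ M)
    (h : Disjoint T (goods M (v k))) : v k T ≤ v k (X k) :=
  (hv.value_le_of_disjoint_goods (empty_subset T) hT (h.mono_left sdiff_subset)).trans
    (hX.value_empty_le hv k)

lemma value_singleton_le (hv : ValidInstance M v) (hX : IsStable M v X) (hg : ¬ IsEnvied v X g)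
    (he : s(k, g) ∈ goods M (v k)) : v k {s(k, g)} ≤ v k (X k) := by
  refine (hX.isContent k _ he).resolve_right fun ⟨j, hkj, hj⟩ => ?_
  have hmem := hv.mem_of_mem_goods (hX.subset_goods j (hj ▸ mem_singleton_self _))
  rcases Sym2.mem_iff.1 hmem with rfl | rfl
  · exact hkj.ne rfl
  · exact hg ⟨k, hkj⟩

end IsStable

namespace IsCompletable

lemma value_completion_le_of_not_isEnvied (hv : ValidInstance M v) (hX : IsCompletable M v X)
    (hψ : ∀ e ∈ unallocated M X, IsReceiver M v X (ψ e) e) (hg : ¬ IsEnvied v X g)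
    (hkg : k ≠ g) : v k (completion M X ψ g) ≤ v k (X k) := by
  have hYM : completion M X ψ g ⊆ M := hX.isAllocation_completion.1 g
  by_cases hcede : IsEnvied v X k ∧ CanCede M v X g k
  · refine hX.value_le_of_subset_claim hv hcede.1 hcede.2 hYM fun e he => ?_
    obtain ⟨heY, hegood⟩ := mem_inter.1 he
    exact mem_claim.2 ⟨((mem_completion.1 heY).imp_right And.left).symm, hegood⟩
  have hsub : completion M X ψ g ∩ goods M (v k) ⊆ {s(k, g)} := fun e he => by
    obtain ⟨heY, hegood⟩ := mem_inter.1 he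
    suffices e ∈ goods M (v g) from
      mem_singleton.2 (hv.eq_mk_of_mem_goods hkg hegood this)
    by_cases heX : e ∈ X g
    · exact hX.subset_goods g heX
    rcases (isReceiver_of_mem_completion hψ heY heX).2 with ⟨-, hgood⟩ | ⟨-, -, h⟩ | ⟨hp, -, -⟩
    · exact hgood
    · exact absurd (h k hegood) hcede
    · exact absurd ⟨_, hp⟩ hg
  rcases subset_singleton_iff.1 hsub with hempty | hsingle
  · exact hX.value_le_bundle_of_disjoint_goods hv hYM (disjoint_iff_inter_eq_empty.2 hempty)
  · have hgood : s(k, g) ∈ goods M (v k) :=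
      (mem_inter.1 (hsingle.ge (mem_singleton_self _))).2
    exact (hv.value_le_value_inter_goods hYM).trans
      (hsingle ▸ hX.value_singleton_le hv hg hgood)

lemma value_completion_le_of_envies (hv : ValidInstance M v) (hX : IsCompletable M v X)
    (hψ : ∀ e ∈ unallocated M X, IsReceiver M v X (ψ e) e) (hp : Envies v X p g)
    (hkp : k ≠ p) (hkg : k ≠ g) : v k (completion M X ψ g) ≤ v k (X k) := by
  have hYM : completion M X ψ g ⊆ M := hX.isAllocation_completion.1 g
  have of_mem {e : Sym2 V} (he : e ∈ completion M X ψ g) (hegood : e ∈ goods M (v k)) :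
      e ∈ unallocated M X ∧ IsEnvied v X k := by
    have heX : e ∉ X g := fun heX => by
      rw [hX.eq_singleton_of_envies hv hp, mem_singleton] at heX
      exact (Sym2.mem_iff.1 (heX ▸ hv.mem_of_mem_goods hegood)).elim hkp hkg
    obtain ⟨hun, hrec⟩ := isReceiver_of_mem_completion hψ he heX
    exact ⟨hun, (hX.mem_chores_of_isReceiver hv hp hrec).2 k hegood⟩
  by_cases hk : IsEnvied v X k
  · obtain ⟨r, hr, hrk⟩ := hX.exists_root k
    refine hX.value_le_of_subset_claim hv hk ⟨hr, .inl hrk⟩ hYM fun e he => ?_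
    obtain ⟨heY, hegood⟩ := mem_inter.1 he
    exact mem_claim.2 ⟨.inl (of_mem heY hegood).1, hegood⟩
  · exact hX.value_le_bundle_of_disjoint_goods hv hYM
      (disjoint_left.2 fun e heY hegood => hk (of_mem heY hegood).2)

lemma value_erase_completion_le (hv : ValidInstance M v) (hX : IsCompletable M v X)
    (hψ : ∀ e ∈ unallocated M X, IsReceiver M v X (ψ e) e) (hp : Envies v X p g)
    (he : e ∈ completion M X ψ g)
    (hle : v p ((completion M X ψ g).erase e) ≤ v p (completion M X ψ g)) :
    v p ((completion M X ψ g).erase e) ≤ v p (X p) := by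
  have hYM : completion M X ψ g ⊆ M := hX.isAllocation_completion.1 g
  have mem_chores_of_notMem {a : Sym2 V} (ha : a ∈ completion M X ψ g) (haX : a ∉ X g) :
      a ∈ chores M (v p) :=
    (hX.mem_chores_of_isReceiver hv hp (isReceiver_of_mem_completion hψ ha haX).2).1
  have heX : e ∈ X g := by
    by_contra heX
    have hlt := (mem_chores.1 (mem_chores_of_notMem he heX)).2 _ (erase_subset_erase e hYM)
    rw [insert_erase he] at hlt
    exact hlt.not_ge hle
  refine hX.value_le_bundle_of_disjoint_goods hv ((erase_subset _ _).trans hYM)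
    (disjoint_left.2 fun a ha hgood => ?_)
  have haX : a ∉ X g := fun haX => by
    rw [hX.eq_singleton_of_envies hv hp, mem_singleton] at heX haX
    exact ne_of_mem_erase ha (haX.trans heX.symm)
  exact disjoint_left.1 disjoint_goods_chores hgood
    (mem_chores_of_notMem (mem_of_mem_erase ha) haX)

lemma condEnviedWeak_completion (hv : ValidInstance M v) (hX : IsCompletable M v X)
    (hψ : ∀ e ∈ unallocated M X, IsReceiver M v X (ψ e) e) :
    CondEnviedWeak v (completion M X ψ) := by
  intro i j hij e he hle
  have hown := hX.value_le_completion hv hψ i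
  have hlt : v i (X i) < v i (completion M X ψ j) := hown.trans_lt hij
  by_cases hj : IsEnvied v X j
  · obtain ⟨p, hp⟩ := hj
    obtain rfl : i = p := by_contra fun hip =>
      hlt.not_ge (hX.value_completion_le_of_envies hv hψ hp hip hij.ne)
    exact (hX.value_erase_completion_le hv hψ hp he hle).trans hown
  · exact absurd (hX.value_completion_le_of_not_isEnvied hv hψ hj hij.ne) hlt.not_ge

end IsCompletable

/-! ### Instances in which an item is incident to all agents -/

lemma ValidInstance.eq_singleton_of_forall_mem (hv : ValidInstance M v) (he : e ∈ M)
    (hall : ∀ k, k ∈ e) : M = {e} := by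
  refine eq_singleton_iff_unique_mem.2 ⟨he, fun a ha => ?_⟩
  have hdiag := hv.1 a ha
  induction a using Sym2.ind with
  | _ u w => exact ((Sym2.mem_and_mem_iff hdiag).1 ⟨hall u, hall w⟩).symm

lemma exists_isAllocation_singleton (v : V → Finset (Sym2 V) → ℝ) (e : Sym2 V) :
    ∃ X, IsAllocation {e} X ∧ CondEnviedWeak v X ∧ CondOwnStrict v X := by
  obtain ⟨a, -⟩ : ∃ a, a ∈ e := ⟨_, e.out_fst_mem⟩
  set X : V → Finset (Sym2 V) := Function.update (fun _ => ∅) a {e}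
  have eq_of_mem {u w : V} {x : Sym2 V} (hx : x ∈ X u) (huw : w ≠ u) :
      (X u).erase x = ∅ ∧ X w = ∅ := by
    grind
  refine ⟨X, ⟨fun u => by grind, fun x hx => ⟨a, by grind, by grind⟩⟩, ?_, ?_⟩
  · intro i j hij x hx _
    obtain ⟨hj, hi⟩ := eq_of_mem hx hij.ne
    rw [hj, hi]
  · intro i j hij x hx _
    obtain ⟨hi, hj⟩ := eq_of_mem hx hij.ne.symm
    rw [hj, hi]

end EFX

theorem stmt10_general {V : Type*} [DecidableEq V] (M : Finset (Sym2 V))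
    (v : V → Finset (Sym2 V) → ℝ) (hvalid : ValidInstance M v) :
    ∃ X : V → Finset (Sym2 V),
      IsAllocation M X ∧ CondEnviedWeak v X ∧ CondOwnStrict v X := by
  by_cases hall : ∃ e ∈ M, ∀ k, k ∈ e
  · obtain ⟨e, he, hmem⟩ := hall
    exact hvalid.eq_singleton_of_forall_mem he hmem ▸ exists_isAllocation_singleton v e
  push Not at hall
  obtain ⟨X, hX⟩ := hvalid.exists_isCompletable
  have exists_receiver (e : Sym2 V) : ∃ g, e ∈ unallocated M X → IsReceiver M v X g e := by
    by_cases he : e ∈ unallocated M X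
    · obtain ⟨k, hk⟩ := hall e (mem_unallocated.1 he).1
      exact (hX.exists_isReceiver hvalid he hk).imp fun _ hg _ => hg
    · exact ⟨(Quot.out e).1, fun h => absurd h he⟩
  choose ψ hψ using exists_receiver
  have halloc : IsAllocation M (completion M X ψ) := hX.isAllocation_completion
  exact ⟨_, halloc, hX.condEnviedWeak_completion hvalid hψ,
    condOwnStrict_of_disjoint_chores hvalid halloc.1 (hX.disjoint_completion_chores hvalid hψ)⟩

/-- For every mixed instance on a simple graph, an EFX⁰₋ allocation
always exists. -/
theorem stmt10 {V : Type*} [Fintype V] [DecidableEq V]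
    (M : Finset (Sym2 V)) (v : V → Finset (Sym2 V) → ℝ)
    (hvalid : ValidInstance M v) :
    ∃ X : V → Finset (Sym2 V),
      IsAllocation M X ∧ CondEnviedWeak v X ∧ CondOwnStrict v X := by
  exact stmt10_general M v hvalid
end
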